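/- In the Gaussian linear model, the median formulation of the shareholder problem coincides with the linear problem: if qY + θᵀ(S_1 − S_0(1+r+λ)) + (C_0+P)(1+r+λ) is a Gaussian random variable for each θ, and there exists θ̄ ∈ Θ(q) such that its mean q m_Y + θ̄ᵀ(m_1 − S_0(1+r+λ)) + (C_0+P)(1+r+λ) > 0, then sup_{θ∈Θ(q)} M[(X(θ,q))^+] = sup_{θ∈Θ(q)} E[X(θ,q)], where M denotes the median. -/

import Mathlib

open MeasureTheory ProbabilityTheory Matrix

/-- Median of a real random variable `X`: `inf {m | P[X ≤ m] ≥ 1/2}`. -/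
noncomputable def median {Ω : Type*} [MeasurableSpace Ω] (μ : Measure Ω) (X : Ω → ℝ) : ℝ :=
  sInf {m : ℝ | (1 : ENNReal) / 2 ≤ μ {ω | X ω ≤ m}}

/-!
Right-continuity of the distribution function makes the median of a random variable a lower
Galois adjoint: `median X ≤ t` if and only if `1 / 2 ≤ P[X ≤ t]`. Since `max X c ≤ t` means
`X ≤ t` and `c ≤ t`, taking medians commutes with truncation from below, `M[X⁺] = M[X]⁺`.
The median of a Gaussian variable is its mean, because the law is invariant under reflection in
the mean and charges every neighbourhood of it; this covers zero variance as well. Finally,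
truncation at `0` does not change the supremum of a set containing a nonnegative number.
-/

open Filter Topology Set

section Order

variable {α : Type*} [ConditionallyCompleteLinearOrder α] {s : Set α} {a c : α}

lemma csSup_image_max_const_of_le (hs : BddAbove s) (ha : a ∈ s) (hca : c ≤ a) :
    sSup ((fun x => max x c) '' s) = sSup s := by
  refine IsLUB.csSup_eq ⟨?_, fun u hu => ?_⟩ ⟨_, mem_image_of_mem _ ha⟩
  · exact forall_mem_image.2 fun x hx =>
      max_le (le_csSup hs hx) (hca.trans (le_csSup hs ha))
  · exact csSup_le ⟨a, ha⟩ fun x hx =>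
      (le_max_left x c).trans (hu (mem_image_of_mem _ hx))

end Order

section Median

variable {Ω : Type*} [MeasurableSpace Ω] {μ : Measure Ω} [IsProbabilityMeasure μ] {X : Ω → ℝ}

lemma median_le_iff (hX : AEMeasurable X μ) (t : ℝ) :
    median μ X ≤ t ↔ 1 / 2 ≤ μ.real {ω | X ω ≤ t} := by
  have := Measure.isProbabilityMeasure_map hX
  set F := cdf (μ.map X)
  have hF (u : ℝ) : μ.real {ω | X ω ≤ u} = F u := by
    rw [cdf_eq_real, map_measureReal_apply_of_aemeasurable hX measurableSet_Iic]
    rfl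
  have hmedian : median μ X = sInf {u | 1 / 2 ≤ F u} := by
    simp [median, ← hF, measureReal_def, ← ENNReal.toReal_le_toReal]
  have hne : {u | 1 / 2 ≤ F u}.Nonempty :=
    ((tendsto_cdf_atTop _).eventually_const_le (by norm_num)).exists
  obtain ⟨l, hl⟩ : ∃ l, F l < 1 / 2 :=
    ((tendsto_cdf_atBot _).eventually_lt_const (by norm_num)).exists
  have hbdd : BddBelow {u | 1 / 2 ≤ F u} :=
    ⟨l, fun u hu => (F.mono.reflect_lt (hl.trans_le hu)).le⟩
  rw [hmedian, hF]
  refine ⟨fun ht => ?_, fun ht => csInf_le hbdd ht⟩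
  have hright : ∀ u ∈ Ioi t, 1 / 2 ≤ F u := fun u hu => by
    obtain ⟨w, hw, hwu⟩ := exists_lt_of_csInf_lt hne (ht.trans_lt hu)
    exact hw.trans (F.mono hwu.le)
  exact ge_of_tendsto ((F.right_continuous t).mono_left (nhdsWithin_mono t Ioi_subset_Ici_self))
    (eventually_mem_nhdsWithin.mono hright)

lemma median_max_const (hX : AEMeasurable X μ) (c : ℝ) :
    median μ (fun ω => max (X ω) c) = max (median μ X) c := by
  refine eq_of_forall_ge_iff fun t => ?_
  rw [median_le_iff (hX.sup_const c), max_le_iff, median_le_iff hX]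
  by_cases hct : c ≤ t <;> simp [hct]

end Median

section Symmetric

variable {ρ : Measure ℝ} {m : ℝ}

lemma measureReal_Ici_two_mul_sub (hρ : MeasurePreserving (fun x => 2 * m - x) ρ ρ) (t : ℝ) :
    ρ.real (Ici (2 * m - t)) = ρ.real (Iic t) := by
  rw [← hρ.measureReal_preimage measurableSet_Ici.nullMeasurableSet]
  simp

variable [IsProbabilityMeasure ρ]

lemma half_le_measureReal_Iic_iff_of_symmetric
    (hρ : MeasurePreserving (fun x => 2 * m - x) ρ ρ)
    (hm : m ∈ ρ.support) (t : ℝ) : 1 / 2 ≤ ρ.real (Iic t) ↔ m ≤ t := by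
  have hsymm := measureReal_Ici_two_mul_sub hρ t
  constructor
  · contrapose!
    intro htm
    have hcentre : 0 < ρ.real (Ioo t (2 * m - t)) :=
      ENNReal.toReal_pos ((Measure.mem_support_iff_forall m).1 hm _
        (Ioo_mem_nhds htm (by linarith))).ne' (measure_ne_top _ _)
    have hcompl : (Ioo t (2 * m - t))ᶜ = Iic t ∪ Ici (2 * m - t) := by
      ext x
      simp [or_iff_not_imp_left]
    have htotal : ρ.real (Ioo t (2 * m - t)) + ρ.real (Ioo t (2 * m - t))ᶜ = 1 :=
      probReal_add_probReal_compl measurableSet_Ioo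
    rw [hcompl, measureReal_union (Iic_disjoint_Ici.2 (by linarith)) measurableSet_Ici] at htotal
    linarith
  · intro hmt
    have hcover : Iic t ∪ Ici (2 * m - t) = univ := Iic_union_Ici_of_le (by linarith)
    have hunion := measureReal_union_le (μ := ρ) (Iic t) (Ici (2 * m - t))
    rw [hcover, probReal_univ] at hunion
    linarith

lemma median_eq_of_hasLaw_of_symmetric {Ω : Type*} [MeasurableSpace Ω] {μ : Measure Ω} {X : Ω → ℝ}
    (hX : HasLaw X ρ μ) (hρ : MeasurePreserving (fun x => 2 * m - x) ρ ρ)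
    (hm : m ∈ ρ.support) : median μ X = m := by
  have := hX.isProbabilityMeasure
  refine eq_of_forall_ge_iff fun t => ?_
  rw [median_le_iff hX.aemeasurable, hX.measureReal_eq measurableSet_Iic]
  exact half_le_measureReal_Iic_iff_of_symmetric hρ hm t

end Symmetric

section Gaussian

variable (m : ℝ) (v : NNReal)

lemma measurePreserving_two_mul_sub_gaussianReal :
    MeasurePreserving (fun x => 2 * m - x) (gaussianReal m v) (gaussianReal m v) where
  measurable := by fun_prop
  map_eq := by rw [gaussianReal_map_const_sub, two_mul, add_sub_cancel_right]

lemma mem_support_gaussianReal : m ∈ (gaussianReal m v).support := by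
  rcases eq_or_ne v 0 with rfl | hv
  · rw [gaussianReal_zero_var, Measure.mem_support_iff_forall]
    intro U hU
    simp [Measure.dirac_apply_of_mem (mem_of_mem_nhds hU)]
  · exact (gaussianReal_absolutelyContinuous' m hv).support_mono
      (Measure.support_eq_univ (μ := (volume : Measure ℝ)) ▸ mem_univ m)

end Gaussian

theorem median_problem_eq_linear_problem_general
    {Ω ι : Type*} [MeasurableSpace Ω] {μ : Measure Ω} [IsProbabilityMeasure μ]
    {X : ι → Ω → ℝ} {ρ : ι → Measure ℝ} {m : ι → ℝ} {s : Set ι}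
    (hX : ∀ i ∈ s, HasLaw (X i) (ρ i) μ)
    (hρ : ∀ i ∈ s, MeasurePreserving (fun x => 2 * m i - x) (ρ i) (ρ i))
    (hm : ∀ i ∈ s, m i ∈ (ρ i).support)
    (hbdd : BddAbove (m '' s)) (hnonneg : ∃ i ∈ s, 0 ≤ m i) :
    sSup ((fun i => median μ (fun ω => max (X i ω) 0)) '' s) = sSup (m '' s) := by
  have hmedian : ∀ i ∈ s, median μ (fun ω => max (X i ω) 0) = max (m i) 0 := fun i hi => by
    have := (hX i hi).isProbabilityMeasure_iff.1 inferInstance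
    rw [median_max_const (hX i hi).aemeasurable,
      median_eq_of_hasLaw_of_symmetric (hX i hi) (hρ i hi) (hm i hi)]
  obtain ⟨i, hi, hmi⟩ := hnonneg
  rw [image_congr hmedian, ← image_image (fun x => max x 0) m,
    csSup_image_max_const_of_le hbdd (mem_image_of_mem m hi) hmi]

/-- In the Gaussian linear model, the median formulation of the shareholder problem
coincides with the linear (whole-bank) problem: if each `X(θ,q)` is Gaussian and some
admissible `θ̄` has positive mean, then
`sup_{θ∈Θ(q)} M[(X(θ,q))⁺] = sup_{θ∈Θ(q)} E[X(θ,q)]`. -/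
theorem median_problem_eq_linear_problem
    {Ω : Type*} [MeasurableSpace Ω] (μ : Measure Ω) [IsProbabilityMeasure μ]
    {d : ℕ} (S1 : Ω → Fin d → ℝ) (Y : Ω → ℝ)
    (hS1 : Measurable S1) (hY : Measurable Y)
    (A : Matrix (Fin d) (Fin d) ℝ) (b : Fin d → ℝ)
    (S0 m1 : Fin d → ℝ) (mY σY ν C0 P r lam q : ℝ)
    (X : (Fin d → ℝ) → Ω → ℝ)
    (hX : ∀ θ ω, X θ ω =
      q * Y ω + θ ⬝ᵥ (S1 ω - (1 + r + lam) • S0) + (C0 + P) * (1 + r + lam))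
    (EX : (Fin d → ℝ) → ℝ)
    (hEX : ∀ θ, EX θ =
      q * mY + θ ⬝ᵥ (m1 - (1 + r + lam) • S0) + (C0 + P) * (1 + r + lam))
    (vθ : (Fin d → ℝ) → NNReal)
    (hgauss : ∀ θ, μ.map (X θ) = gaussianReal (EX θ) (vθ θ))
    (Θ : Set (Fin d → ℝ))
    (hΘ : Θ = {θ | C0 = ν * Real.sqrt (θ ⬝ᵥ A *ᵥ θ + 2 * q * (θ ⬝ᵥ b) + σY ^ 2 * q ^ 2)})
    (hΘcompact : IsCompact Θ)
    (hbar : ∃ θbar ∈ Θ, 0 < EX θbar) :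
    sSup ((fun θ => median μ (fun ω => max (X θ ω) 0)) '' Θ) =
      sSup ((fun θ => EX θ) '' Θ) := by
  have hlaw (θ) : HasLaw (X θ) (gaussianReal (EX θ) (vθ θ)) μ :=
    ⟨aemeasurable_of_map_neZero (by rw [hgauss]; infer_instance), hgauss θ⟩
  have hcont : Continuous EX := by
    rw [funext hEX]
    fun_prop
  exact median_problem_eq_linear_problem_general (fun θ _ => hlaw θ)
    (fun θ _ => measurePreserving_two_mul_sub_gaussianReal (EX θ) (vθ θ))
    (fun θ _ => mem_support_gaussianReal (EX θ) (vθ θ))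
    (hΘcompact.bddAbove_image hcont.continuousOn)
    (hbar.imp fun _ h => h.imp_right le_of_lt)
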